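/- If a subshift (X, σ) satisfies liminf_{n→∞} P_X(n)/n < k for some natural number k, then (X, σ) has at most k−1 distinct nonatomic generic measures. -/

import Mathlib

open MeasureTheory Filter
open scoped ENNReal

/-- The left shift on bi-infinite sequences. -/
def shift {A : Type*} (x : ℤ → A) : ℤ → A := fun n => x (n + 1)

/-- A subshift: a closed, shift-invariant subset of `A^ℤ`. -/
def IsSubshift {A : Type*} [TopologicalSpace A] (X : Set (ℤ → A)) : Prop :=
  IsClosed X ∧ shift '' X = X

/-- The word complexity `P_X(n)`: the number of words of length `n` occurring in `X`. -/
noncomputable def complexity {A : Type*} (X : Set (ℤ → A)) (n : ℕ) : ℕ :=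
  Nat.card {w : Fin n → A // ∃ x ∈ X, ∃ m : ℤ, ∀ t : Fin n, x (m + (t : ℕ)) = w t}

/-- `x` is a generic point for the measure `μ`. -/
def IsGenericPt {A : Type*} [TopologicalSpace A] [MeasurableSpace A]
    (μ : Measure (ℤ → A)) (x : ℤ → A) : Prop :=
  ∀ f : (ℤ → A) → ℝ, Continuous f →
    Tendsto (fun N : ℕ => (∑ n ∈ Finset.range N, f (shift^[n] x)) / (N : ℝ))
      atTop (nhds (∫ y, f y ∂μ))

/-- A generic measure on the subshift `X`: a Borel probability measure carried by `X`
possessing a generic point in `X`. -/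
def GenericMeasureOn {A : Type*} [TopologicalSpace A] [MeasurableSpace A]
    (X : Set (ℤ → A)) (μ : Measure (ℤ → A)) : Prop :=
  IsProbabilityMeasure μ ∧ μ X = 1 ∧ ∃ x ∈ X, IsGenericPt μ x

/-!
A generic point `x` of a nonatomic measure is not eventually periodic to the right: otherwise the
measure would sit on the countable set of periodic sequences. For such an `x`, an argument in the
style of Morse and Hedlund gives `n - m` words of length `n` whose prefixes of length `m` all occur
in `x` at positions below `n`: extending words by one letter at a time adds at least one word, for
otherwise a word repeated early would force a period.

On the other hand, if `x` and `y` are generic for distinct measures, some local observable has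
different averages along them, and so for large `n` the initial segments of length `2 n` have no
word of length `m ≥ ε n` in common. Hence the families of `n - m` words attached to `k` measures
are disjoint, and `P_X(n) ≥ k (n - m)` with `m` an arbitrarily small proportion of `n`.
-/

section Words

variable {A : Type*} {x y : ℕ → A} {s s' m n N : ℕ}

/-- The word of length `n` read in the sequence `x` from position `s`. -/
def word (x : ℕ → A) (s n : ℕ) : Fin n → A := fun t => x (s + t)

/-- The sequence `x` is periodic from some position on. -/
def IsEventuallyPeriodic (x : ℕ → A) : Prop :=
  ∃ a p, 0 < p ∧ Function.Periodic (fun t => x (a + t)) p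

/-- The positions at which the word of length `m` is one that already occurs before position `N`.
The words of length `n ≥ m` read there are those counted in the Morse–Hedlund argument. -/
def earlyStarts (x : ℕ → A) (m N : ℕ) : Set ℕ :=
  {s | ∃ r < N, word x s m = word x r m}

theorem word_eq_word_iff : word x s n = word y s' n ↔ ∀ t < n, x (s + t) = y (s' + t) := by
  simp only [word, funext_iff, Fin.forall_iff]

theorem word_eq_word_of_le (hmn : m ≤ n) (h : word x s n = word y s' n) :
    word x s m = word y s' m := by
  rw [word_eq_word_iff] at h ⊢
  exact fun t ht => h t (ht.trans_le hmn)

theorem word_succ_start_eq (h : word x s (n + 1) = word y s' (n + 1)) :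
    word x (s + 1) n = word y (s' + 1) n := by
  rw [word_eq_word_iff] at h ⊢
  intro t ht
  simpa only [Nat.add_assoc, Nat.add_comm 1 t] using h (t + 1) (by omega)

theorem mem_earlyStarts_of_lt (hs : s < N) : s ∈ earlyStarts x m N := ⟨s, hs, rfl⟩

theorem mem_earlyStarts_of_word_eq (hs : s ∈ earlyStarts x m N)
    (h : word x s' m = word x s m) : s' ∈ earlyStarts x m N := by
  obtain ⟨r, hr, hsr⟩ := hs
  exact ⟨r, hr, h.trans hsr⟩

theorem image_init_words (E : Set ℕ) :
    Fin.init '' ((word x · (n + 1)) '' E) = (word x · n) '' E :=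
  Set.image_image _ _ _

/-- Both extensions of a repeated word truncate to it, so one of them can be spared. -/
theorem encard_words_add_one_le {E : Set ℕ} (hs : s ∈ E) (hs' : s' ∈ E)
    (heq : word x s n = word x s' n) (hne : word x s (n + 1) ≠ word x s' (n + 1)) :
    ((word x · n) '' E).encard + 1 ≤ ((word x · (n + 1)) '' E).encard := by
  set W := (word x · (n + 1)) '' E
  have hcover : (word x · n) '' E ⊆ Fin.init '' (W \ {word x s (n + 1)}) := by
    rintro _ ⟨r, hr, rfl⟩
    by_cases h : word x r (n + 1) = word x s (n + 1)
    · exact ⟨word x s' (n + 1), ⟨⟨s', hs', rfl⟩, hne.symm⟩,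
        heq.symm.trans (congrArg Fin.init h).symm⟩
    · exact ⟨word x r (n + 1), ⟨⟨r, hr, rfl⟩, h⟩, rfl⟩
  calc ((word x · n) '' E).encard + 1 ≤ (W \ {word x s (n + 1)}).encard + 1 := by
        gcongr
        exact (Set.encard_le_encard hcover).trans (Set.encard_image_le _ _)
    _ = W.encard := Set.encard_sdiff_singleton_add_one ⟨s, hs, rfl⟩

theorem isEventuallyPeriodic_of_word_eq {a b : ℕ} (hmn : m ≤ n)
    (hdet : ∀ s ∈ earlyStarts x m N, ∀ s' ∈ earlyStarts x m N,
      word x s n = word x s' n → word x s (n + 1) = word x s' (n + 1))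
    (hab : a < b) (hb : b < N) (h : word x a n = word x b n) : IsEventuallyPeriodic x := by
  have hrun : ∀ t, (∀ j ≤ b + t, j ∈ earlyStarts x m N) ∧
      word x (a + t) (n + 1) = word x (b + t) (n + 1) := by
    intro t
    induction t with
    | zero =>
      have hearly : ∀ j ≤ b, j ∈ earlyStarts x m N := fun j hj =>
        mem_earlyStarts_of_lt (hj.trans_lt hb)
      exact ⟨hearly, hdet a (hearly a hab.le) b (hearly b le_rfl) h⟩
    | succ t ih =>
      obtain ⟨hearly, hword⟩ := ih
      have hnext : word x (a + t + 1) n = word x (b + t + 1) n := word_succ_start_eq hword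
      have ha : a + t + 1 ∈ earlyStarts x m N := hearly _ (by omega)
      have hb' : b + t + 1 ∈ earlyStarts x m N :=
        mem_earlyStarts_of_word_eq ha (word_eq_word_of_le hmn hnext.symm)
      refine ⟨fun j hj => ?_, hdet _ ha _ hb' hnext⟩
      rcases Nat.le_succ_iff.1 hj with hj | rfl
      exacts [hearly j hj, hb']
  refine ⟨a, b - a, by omega, fun t => ?_⟩
  have hletter : x (a + t) = x (b + t) := word_eq_word_iff.1 (hrun t).2 0 n.succ_pos
  change x (a + (t + (b - a))) = x (a + t)
  rw [hletter]
  congr 1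
  omega

theorem exists_word_eq_and_succ_ne (hx : ¬ IsEventuallyPeriodic x) (hmn : m ≤ n)
    (hcard : ((word x · n) '' earlyStarts x m N).encard < N) :
    ∃ s ∈ earlyStarts x m N, ∃ s' ∈ earlyStarts x m N,
      word x s n = word x s' n ∧ word x s (n + 1) ≠ word x s' (n + 1) := by
  have hrepeat : ∃ a b, a < b ∧ b < N ∧ word x a n = word x b n := by
    by_contra! hdistinct
    have hinj : Set.InjOn (word x · n) (Set.Iio N) := by
      intro a ha b hb h
      rcases lt_trichotomy a b with hab | hab | hab
      exacts [absurd h (hdistinct a b hab hb), hab, absurd h.symm (hdistinct b a hab ha)]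
    refine hcard.not_ge ?_
    calc (N : ℕ∞) = ((word x · n) '' Set.Iio N).encard := by
          rw [hinj.encard_image, ← Finset.coe_range, Set.encard_coe_eq_coe_finsetCard,
            Finset.card_range]
      _ ≤ _ := Set.encard_le_encard (Set.image_mono fun _ => mem_earlyStarts_of_lt)
  obtain ⟨a, b, hab, hb, h⟩ := hrepeat
  by_contra! hdet
  exact hx (isEventuallyPeriodic_of_word_eq hmn hdet hab hb h)

theorem min_le_encard_words (hx : ¬ IsEventuallyPeriodic x) (m N d : ℕ) :
    min (N : ℕ∞) d ≤ ((word x · (m + d)) '' earlyStarts x m N).encard := by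
  induction d with
  | zero => simp
  | succ d ih =>
    rcases lt_or_ge ((word x · (m + d)) '' earlyStarts x m N).encard (N : ℕ∞) with hlt | hge
    · obtain ⟨s, hs, s', hs', heq, hne⟩ := exists_word_eq_and_succ_ne hx (Nat.le_add_right m d) hlt
      have hd : (d : ℕ∞) ≤ ((word x · (m + d)) '' earlyStarts x m N).encard :=
        (min_le_iff.1 ih).resolve_left hlt.not_ge
      calc min (N : ℕ∞) (d + 1 : ℕ) ≤ d + 1 := by simp
        _ ≤ ((word x · (m + d)) '' earlyStarts x m N).encard + 1 := by gcongr
        _ ≤ _ := encard_words_add_one_le hs hs' heq hne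
    · calc min (N : ℕ∞) (d + 1 : ℕ) ≤ N := min_le_left _ _
        _ ≤ ((word x · (m + d)) '' earlyStarts x m N).encard := hge
        _ ≤ _ := by
          rw [← image_init_words]
          exact Set.encard_image_le _ _

/-- The right half `x 0, x 1, …` of a bi-infinite sequence, on which genericity depends. -/
def rightHalf (x : ℤ → A) : ℕ → A := fun t => x t

theorem encard_le_complexity [Finite A] {X : Set (ℤ → A)} {W : Set (Fin n → A)}
    (hW : ∀ w ∈ W, ∃ x ∈ X, ∃ s, word (rightHalf x) s n = w) : W.encard ≤ complexity X n := by
  have hsub : W ⊆ {w | ∃ x ∈ X, ∃ m : ℤ, ∀ t : Fin n, x (m + (t : ℕ)) = w t} := by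
    intro w hw
    obtain ⟨x, hx, s, rfl⟩ := hW w hw
    exact ⟨x, hx, s, fun t => by simp only [word, rightHalf, Nat.cast_add]⟩
  refine (Set.encard_le_encard hsub).trans_eq ?_
  rw [← (Set.toFinite _).cast_ncard_eq]
  rfl

theorem card_mul_sub_le_complexity [Finite A] {X : Set (ℤ → A)} {ι : Type*} [Fintype ι]
    {x : ι → ℤ → A} (hxX : ∀ i, x i ∈ X) (hper : ∀ i, ¬ IsEventuallyPeriodic (rightHalf (x i)))
    (hsep : Pairwise fun i j => ∀ s < n, ∀ s' < n,
      word (rightHalf (x i)) s m ≠ word (rightHalf (x j)) s' m) :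
    Fintype.card ι * (n - m) ≤ complexity X n := by
  rcases le_total n m with hnm | hmn
  · simp [Nat.sub_eq_zero_of_le hnm]
  let W (i : ι) : Set (Fin n → A) :=
    (word (rightHalf (x i)) · n) '' earlyStarts (rightHalf (x i)) m n
  have hcard (i : ι) : ((n - m : ℕ) : ℕ∞) ≤ (W i).encard := by
    have h := min_le_encard_words (hper i) m n (n - m)
    rwa [min_eq_right (by exact_mod_cast Nat.sub_le n m), Nat.add_sub_cancel' hmn] at h
  have hdisj : Pairwise (Function.onFun Disjoint W) := by
    intro i j hij
    rw [Function.onFun, Set.disjoint_left]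
    rintro _ ⟨s, ⟨r, hr, hsr⟩, rfl⟩ ⟨s', ⟨r', hr', hsr'⟩, hss'⟩
    exact hsep hij r hr r' hr' (hsr.symm.trans ((word_eq_word_of_le hmn hss'.symm).trans hsr'))
  have hlang : ∀ w ∈ ⋃ i, W i, ∃ z ∈ X, ∃ s, word (rightHalf z) s n = w := by
    intro w hw
    obtain ⟨i, s, -, hs⟩ := Set.mem_iUnion.1 hw
    exact ⟨x i, hxX i, s, hs⟩
  have hsum : ((Fintype.card ι * (n - m) : ℕ) : ℕ∞) ≤ complexity X n :=
    calc ((Fintype.card ι * (n - m) : ℕ) : ℕ∞) = ∑ _i : ι, ((n - m : ℕ) : ℕ∞) := by simp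
      _ ≤ ∑ i, (W i).encard := Finset.sum_le_sum fun i _ => hcard i
      _ = (⋃ i, W i).encard := by
        rw [Set.encard_iUnion_of_finite hdisj, finsum_eq_sum_of_fintype]
      _ ≤ complexity X n := encard_le_complexity hlang
  exact_mod_cast hsum

end Words

section Shift

variable {A : Type*}

theorem iterate_shift_apply (x : ℤ → A) (n : ℕ) (i : ℤ) : (shift^[n] x) i = x (n + i) := by
  induction n generalizing i with
  | zero => simp
  | succ n ih =>
    rw [Function.iterate_succ_apply', shift, ih]
    push_cast
    ring_nf

theorem apply_iterate_shift_eq_of_word_eq {β : Type*} {x y : ℤ → A} {f : (ℤ → A) → β}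
    {R s s' l t : ℕ} (hf : DependsOn f (Set.Icc (-R : ℤ) R))
    (h : word (rightHalf x) s (2 * R + l) = word (rightHalf y) s' (2 * R + l)) (ht : t < l) :
    f (shift^[s + R + t] x) = f (shift^[s' + R + t] y) := by
  refine hf fun i hi => ?_
  obtain ⟨j, hj⟩ : ∃ j : ℕ, (j : ℤ) = R + t + i := ⟨(R + t + i).toNat, by grind⟩
  have hletter : x ((s + j : ℕ) : ℤ) = y ((s' + j : ℕ) : ℤ) :=
    word_eq_word_iff.1 h j (by grind)
  rw [iterate_shift_apply, iterate_shift_apply]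
  convert hletter using 2 <;> grind

theorem countable_setOf_periodic [Countable A] {p : ℕ} (hp : 0 < p) :
    {z : ℤ → A | Function.Periodic z p}.Countable := by
  have hinj : Set.InjOn (fun (z : ℤ → A) (t : Fin p) => z (t : ℕ))
      {z : ℤ → A | Function.Periodic z p} := by
    intro z hz z' hz' h
    funext i
    have hpos : (0 : ℤ) < p := by exact_mod_cast hp
    obtain ⟨t, ht⟩ := Int.eq_ofNat_of_zero_le (Int.emod_nonneg i hpos.ne')
    have htp : t < p := by
      have := Int.emod_lt_of_pos i hpos
      omega
    have hmod {u : ℤ → A} (hu : Function.Periodic u p) : u i = u t := by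
      rw [← ht, Int.emod_def, mul_comm]
      exact (hu.sub_int_mul_eq _).symm
    exact (hmod hz).trans ((congrFun h ⟨t, htp⟩).trans (hmod hz').symm)
  exact Set.MapsTo.countable_of_injOn (Set.mapsTo_univ _ _) hinj Set.countable_univ

end Shift

section Averages

variable {g : ℕ → ℝ} {c δ : ℝ}

theorem eventually_abs_sum_range_sub_le
    (hg : Tendsto (fun N : ℕ => (∑ t ∈ Finset.range N, g t) / (N : ℝ)) atTop (nhds c))
    (hδ : 0 < δ) :
    ∀ᶠ n : ℕ in atTop, ∀ N ≤ n, |∑ t ∈ Finset.range N, g t - N * c| ≤ δ * n := by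
  obtain ⟨N₀, hN₀⟩ := Metric.tendsto_atTop.1 hg δ hδ
  have hlarge : Tendsto (fun n : ℕ => δ * (n : ℝ)) atTop atTop :=
    tendsto_natCast_atTop_atTop.const_mul_atTop hδ
  have hsmall : ∀ᶠ n : ℕ in atTop, ∀ N ∈ Finset.range (N₀ + 1),
      |∑ t ∈ Finset.range N, g t - N * c| ≤ δ * n :=
    (eventually_all_finset _).2 fun N _ => hlarge.eventually_ge_atTop _
  filter_upwards [hsmall] with n hn N hNn
  rcases lt_or_ge N (N₀ + 1) with hN | hN
  · exact hn N (Finset.mem_range.2 hN)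
  · have hpos : (0 : ℝ) < N := by exact_mod_cast (by omega : 0 < N)
    calc |∑ t ∈ Finset.range N, g t - N * c|
        = |(∑ t ∈ Finset.range N, g t) / N - c| * N := by
          rw [← abs_of_pos hpos, ← abs_mul, abs_of_pos hpos]
          congr 1
          field_simp
      _ ≤ δ * N := by
          gcongr
          exact (hN₀ N (by omega)).le
      _ ≤ δ * n := by gcongr

theorem eventually_abs_sum_window_sub_le
    (hg : Tendsto (fun N : ℕ => (∑ t ∈ Finset.range N, g t) / (N : ℝ)) atTop (nhds c))
    (hδ : 0 < δ) :
    ∀ᶠ n : ℕ in atTop, ∀ s l : ℕ, s + l ≤ n →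
      |∑ t ∈ Finset.range l, g (s + t) - l * c| ≤ δ * n := by
  filter_upwards [eventually_abs_sum_range_sub_le hg (half_pos hδ)] with n hn s l hsl
  have hwindow : ∑ t ∈ Finset.range l, g (s + t) - l * c =
      (∑ t ∈ Finset.range (s + l), g t - (s + l : ℕ) * c) -
        (∑ t ∈ Finset.range s, g t - s * c) := by
    rw [Finset.sum_range_add]
    push_cast
    ring
  calc |∑ t ∈ Finset.range l, g (s + t) - l * c|
      ≤ |∑ t ∈ Finset.range (s + l), g t - (s + l : ℕ) * c| +
          |∑ t ∈ Finset.range s, g t - s * c| := hwindow ▸ abs_sub _ _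
    _ ≤ δ / 2 * n + δ / 2 * n := add_le_add (hn _ hsl) (hn _ (by omega))
    _ = δ * n := by ring

end Averages

section Generic

variable {A : Type*} [TopologicalSpace A] [MeasurableSpace A] {μ ν : Measure (ℤ → A)}
  {x y : ℤ → A}

theorem IsGenericPt.measureReal_eq_one (hx : IsGenericPt μ x) {C : Set (ℤ → A)} (hC : IsClopen C)
    (hCm : MeasurableSet C) (hmem : ∀ᶠ n in atTop, shift^[n] x ∈ C) : μ.real C = 1 := by
  have hvisits : Tendsto (fun n => C.indicator (1 : (ℤ → A) → ℝ) (shift^[n] x)) atTop (nhds 1) :=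
    tendsto_const_nhds.congr' (hmem.mono fun n hn => by simp [hn])
  have havg := hx (C.indicator 1) (hC.continuous_indicator continuous_const)
  rw [integral_indicator_one hCm] at havg
  refine tendsto_nhds_unique havg (hvisits.cesaro.congr fun n => ?_)
  rw [div_eq_inv_mul]

theorem IsGenericPt.isProbabilityMeasure (hx : IsGenericPt μ x) : IsProbabilityMeasure μ :=
  isProbabilityMeasure_iff_real.2 <|
    hx.measureReal_eq_one isClopen_univ MeasurableSet.univ (Eventually.of_forall fun _ => trivial)

theorem IsGenericPt.not_isEventuallyPeriodic [Countable A] [DiscreteTopology A]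
    [MeasurableSingletonClass A] [NullSingletonClass μ] (hx : IsGenericPt μ x) :
    ¬ IsEventuallyPeriodic (rightHalf x) := by
  rintro ⟨a, p, hp, hper⟩
  have := hx.isProbabilityMeasure
  have hae : ∀ᵐ z ∂μ, Function.Periodic z (p : ℤ) := by
    refine ae_all_iff.2 fun i => ?_
    let C : Set (ℤ → A) := {z | z (i + p) = z i}
    have hclopen : IsClopen C :=
      (isClopen_discrete (Set.diagonal A)).preimage
        (f := fun z : ℤ → A => (z (i + p), z i)) (by fun_prop)
    have hmeas : MeasurableSet C :=
      measurableSet_eq_fun (measurable_pi_apply _) (measurable_pi_apply _)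
    have hmem : ∀ᶠ n in atTop, shift^[n] x ∈ C := by
      filter_upwards [eventually_ge_atTop (a + i.natAbs)] with n hn
      obtain ⟨t, ht⟩ : ∃ t : ℕ, (n + i : ℤ) = ((a + t : ℕ) : ℤ) := ⟨(n + i - a).toNat, by omega⟩
      have hxt : x ((a + (t + p) : ℕ) : ℤ) = x ((a + t : ℕ) : ℤ) := hper t
      change (shift^[n] x) (i + p) = (shift^[n] x) i
      rw [iterate_shift_apply, iterate_shift_apply, ← add_assoc, ht, ← hxt]
      push_cast
      ring_nf
    have hone : μ C = 1 := by
      rw [← ofReal_measureReal, hx.measureReal_eq_one hclopen hmeas hmem, ENNReal.ofReal_one]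
    exact (mem_ae_iff_prob_eq_one hmeas).2 hone
  have hnone : ∀ᵐ z ∂μ, ¬ Function.Periodic z (p : ℤ) :=
    measure_eq_zero_iff_ae_notMem.1 ((countable_setOf_periodic hp).measure_zero μ)
  obtain ⟨z, hz, hz'⟩ := (hae.and hnone).exists
  exact hz' hz

theorem exists_continuous_dependsOn_integral_ne [DiscreteTopology A] [IsFiniteMeasure μ]
    [IsFiniteMeasure ν] (hne : μ ≠ ν) :
    ∃ (f : (ℤ → A) → ℝ) (R : ℕ), Continuous f ∧ DependsOn f (Set.Icc (-R : ℤ) R) ∧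
      ∫ z, f z ∂μ ≠ ∫ z, f z ∂ν := by
  by_contra! hcon
  have hcyl : ∀ C ∈ measurableCylinders fun _ : ℤ => A, μ C = ν C := by
    intro C hC
    obtain ⟨I, S, hS, rfl⟩ := (mem_measurableCylinders _).1 hC
    have hclopen : IsClopen (cylinder (α := fun _ : ℤ => A) I S) :=
      (isClopen_discrete S).preimage (by fun_prop)
    have hI : (I : Set ℤ) ⊆ Set.Icc (-(I.sup Int.natAbs : ℕ) : ℤ) (I.sup Int.natAbs : ℕ) := by
      intro i hi
      have : i.natAbs ≤ I.sup Int.natAbs := Finset.le_sup (f := Int.natAbs) hi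
      exact ⟨by omega, by omega⟩
    have hdep := (dependsOn_cylinder_indicator_const (α := fun _ : ℤ => A) S (1 : ℝ)).mono hI
    have hint := hcon _ _ (hclopen.continuous_indicator continuous_const) hdep
    rwa [integral_indicator_const _ (hS.cylinder _), integral_indicator_const _ (hS.cylinder _),
      smul_eq_mul, smul_eq_mul, mul_one, mul_one, measureReal_eq_measureReal_iff] at hint
  exact hne <| ext_of_generate_finite _ generateFrom_measurableCylinders.symm
    isPiSystem_measurableCylinders hcyl (hcyl _ (univ_mem_measurableCylinders _))

theorem IsGenericPt.eventually_word_ne [DiscreteTopology A] (hx : IsGenericPt μ x)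
    (hy : IsGenericPt ν y) (hne : μ ≠ ν) {ε : ℝ} (hε : 0 < ε) :
    ∀ᶠ n : ℕ in atTop, ∀ m : ℕ, ε * n ≤ m → ∀ s s', s + m ≤ n → s' + m ≤ n →
      word (rightHalf x) s m ≠ word (rightHalf y) s' m := by
  have := hx.isProbabilityMeasure
  have := hy.isProbabilityMeasure
  obtain ⟨f, R, hfc, hfR, hfne⟩ := exists_continuous_dependsOn_integral_ne hne
  set c := ∫ z, f z ∂μ
  set d := ∫ z, f z ∂ν
  have hcd : 0 < |c - d| := abs_pos.2 (sub_ne_zero_of_ne hfne)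
  have hδ : 0 < ε * |c - d| / 8 := by positivity
  have hlarge : ∀ᶠ n : ℕ in atTop, 4 * R < ε * n :=
    (tendsto_natCast_atTop_atTop.const_mul_atTop hε).eventually_gt_atTop _
  filter_upwards [eventually_abs_sum_window_sub_le (hx f hfc) hδ,
    eventually_abs_sum_window_sub_le (hy f hfc) hδ, hlarge] with n hxn hyn hRn m hm s s' hs hs' h
  obtain ⟨l, rfl⟩ : ∃ l, m = 2 * R + l := by
    have : (2 * R : ℝ) ≤ m := by linarith [R.cast_nonneg (α := ℝ)]
    exact Nat.exists_eq_add_of_le (by exact_mod_cast this)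
  have hsum : ∑ t ∈ Finset.range l, f (shift^[s + R + t] x) =
      ∑ t ∈ Finset.range l, f (shift^[s' + R + t] y) :=
    Finset.sum_congr rfl fun t ht =>
      apply_iterate_shift_eq_of_word_eq hfR h (Finset.mem_range.1 ht)
  have hxl := hxn (s + R) l (by omega)
  have hyl := hyn (s' + R) l (by omega)
  rw [← hsum] at hyl
  have hl : ε * n / 2 < l := by
    push_cast at hm
    linarith
  have hupper : l * |c - d| ≤ ε * n / 4 * |c - d| :=
    calc l * |c - d| = |l * c - l * d| := by rw [← mul_sub, abs_mul, Nat.abs_cast]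
      _ ≤ ε * |c - d| / 8 * n + ε * |c - d| / 8 * n :=
        (abs_sub_le _ (∑ t ∈ Finset.range l, f (shift^[s + R + t] x)) _).trans
          (add_le_add ((abs_sub_comm _ _).trans_le hxl) hyl)
      _ = ε * n / 4 * |c - d| := by ring
  linarith [le_of_mul_le_mul_right hupper hcd, R.cast_nonneg (α := ℝ)]

variable [Finite A] [DiscreteTopology A] [MeasurableSingletonClass A] {X : Set (ℤ → A)}
  {ι : Type*} [Fintype ι]

theorem eventually_card_mul_sub_ceil_le_complexity {μ : ι → Measure (ℤ → A)}
    [∀ i, NullSingletonClass (μ i)] (hμ : Function.Injective μ)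
    (hgen : ∀ i, ∃ x ∈ X, IsGenericPt (μ i) x) {ε : ℝ} (hε : 0 < ε) :
    ∀ᶠ n : ℕ in atTop, Fintype.card ι * (n - ⌈ε * n⌉₊) ≤ complexity X n := by
  choose x hxX hx using hgen
  have hsep : ∀ᶠ n : ℕ in atTop, ∀ i j, i ≠ j → ∀ m : ℕ, ε / 2 * n ≤ m → ∀ s s',
      s + m ≤ n → s' + m ≤ n → word (rightHalf (x i)) s m ≠ word (rightHalf (x j)) s' m :=
    eventually_all.2 fun i => eventually_all.2 fun j => eventually_imp_distrib_left.2 fun hij =>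
      (hx i).eventually_word_ne (hx j) (hμ.ne hij) (half_pos hε)
  have hdouble : Tendsto (fun n : ℕ => 2 * n) atTop atTop :=
    tendsto_id.const_mul_atTop' two_pos
  filter_upwards [hdouble.eventually hsep] with n hn
  rcases le_total n ⌈ε * n⌉₊ with hle | hle
  · simp [Nat.sub_eq_zero_of_le hle]
  · have hlong : ε / 2 * (2 * n : ℕ) ≤ ⌈ε * n⌉₊ :=
      calc ε / 2 * (2 * n : ℕ) = ε * n := by
            push_cast
            ring
        _ ≤ ⌈ε * n⌉₊ := Nat.le_ceil _
    refine card_mul_sub_le_complexity hxX (fun i => (hx i).not_isEventuallyPeriodic) ?_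
    exact fun i j hij s hs s' hs' => hn i j hij _ hlong s s' (by omega) (by omega)

theorem eventually_mul_le_complexity {μ : ι → Measure (ℤ → A)} [∀ i, NullSingletonClass (μ i)]
    (hμ : Function.Injective μ) (hgen : ∀ i, ∃ x ∈ X, IsGenericPt (μ i) x) {r : ℝ} (hr : 0 ≤ r)
    (hrk : r < Fintype.card ι) : ∀ᶠ n : ℕ in atTop, r * n ≤ complexity X n := by
  set k : ℝ := (Fintype.card ι : ℝ)
  have hk : 0 < k := hr.trans_lt hrk
  have hgap : 0 < k - r := sub_pos.2 hrk
  obtain ⟨ε, hε, hkε⟩ : ∃ ε > 0, k * ε = (k - r) / 2 :=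
    ⟨(k - r) / 2 / k, by positivity, mul_div_cancel₀ _ hk.ne'⟩
  have hε1 : ε ≤ 1 := le_of_mul_le_mul_left (by linarith) hk
  have hlarge : ∀ᶠ n : ℕ in atTop, k ≤ (k - r) / 2 * n :=
    (tendsto_natCast_atTop_atTop.const_mul_atTop (half_pos hgap)).eventually_ge_atTop _
  filter_upwards [eventually_card_mul_sub_ceil_le_complexity hμ hgen hε, hlarge] with n hcount hkn
  have hceil : ⌈ε * n⌉₊ ≤ n := Nat.ceil_le.2 (mul_le_of_le_one_left n.cast_nonneg hε1)
  calc r * n ≤ k * (n - (ε * n + 1)) := by linear_combination hkn + n * hkε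
    _ ≤ k * (n - ⌈ε * n⌉₊) := by
      gcongr
      exact (Nat.ceil_lt_add_one (by positivity)).le
    _ = (Fintype.card ι * (n - ⌈ε * n⌉₊) : ℕ) := by rw [Nat.cast_mul, Nat.cast_sub hceil]
    _ ≤ complexity X n := by exact_mod_cast hcount

end Generic

theorem at_most_k_sub_one_generic_measures_general {A : Type*} [Finite A] [TopologicalSpace A]
    [DiscreteTopology A] [MeasurableSpace A] [MeasurableSingletonClass A] {X : Set (ℤ → A)}
    {ι : Type*} [Fintype ι] {μ : ι → Measure (ℤ → A)} [∀ i, NullSingletonClass (μ i)]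
    (hμ : Function.Injective μ) (hgen : ∀ i, ∃ x ∈ X, IsGenericPt (μ i) x) :
    (Fintype.card ι : ℝ≥0∞) ≤
      liminf (fun n : ℕ => (complexity X n : ℝ≥0∞) / (n : ℝ≥0∞)) atTop := by
  refine ENNReal.le_of_forall_nnreal_lt fun r hr => le_liminf_of_le (by isBoundedDefault) ?_
  have hrk : (r : ℝ) < Fintype.card ι := by exact_mod_cast hr
  filter_upwards [eventually_mul_le_complexity hμ hgen r.coe_nonneg hrk, eventually_gt_atTop 0]
    with n hn hpos
  rw [ENNReal.le_div_iff_mul_le (by simp [hpos.ne']) (by simp)]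
  exact_mod_cast hn

/-- If `liminf P_X(n)/n < k`, then the subshift has at most `k-1` distinct nonatomic
generic measures (i.e. there is no family of `k` distinct ones). -/
theorem at_most_k_sub_one_generic_measures
    {A : Type*} [Fintype A] [TopologicalSpace A] [DiscreteTopology A]
    [MeasurableSpace A] [BorelSpace A]
    (X : Set (ℤ → A)) (hX : IsSubshift X) (k : ℕ)
    (hcomp : liminf (fun n : ℕ => (complexity X n : ℝ≥0∞) / (n : ℝ≥0∞)) atTop < (k : ℝ≥0∞)) :
    ¬ ∃ μ : Fin k → Measure (ℤ → A), Function.Injective μ ∧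
        ∀ i, (∀ y, μ i {y} = 0) ∧ GenericMeasureOn X (μ i) := by
  rintro ⟨μ, hinj, hμ⟩
  have (i : Fin k) : NullSingletonClass (μ i) := ⟨(hμ i).1⟩
  have hk := at_most_k_sub_one_generic_measures_general hinj fun i => (hμ i).2.2.2
  exact hcomp.not_ge (by simpa only [Fintype.card_fin] using hk)
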